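/- Suppose μ ≥ 0 componentwise. Let U* be a relaxed feasible solution of M-CLP, and define U₀ : [0,T] → ℝ^J by U₀(0) = U*(0+) := lim_{t↓0} U*(t) and U₀(t) = U*(t) for 0 < t ≤ T. Then U₀ is a relaxed feasible solution of M-CLP that is right-continuous at 0 (hence on all of [0,T]), and z(U₀) − z(U*) = μᵀ(U*(0+) − U*(0)) ≥ 0. -/

import Mathlib

open MeasureTheory Filter

/-- A relaxed feasible solution of M-CLP: as a feasible solution, but right-continuity
is only required on `(0,T]`, so possibly `U(0) < U(0+)`. -/
def RelaxedPrimalFeasible {K J : ℕ} (A : Matrix (Fin K) (Fin J) ℝ) (b β lam : Fin K → ℝ)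
    (T : ℝ) (U : ℝ → Fin J → ℝ) : Prop :=
  (∀ j, MonotoneOn (fun t => U t j) (Set.Icc 0 T)) ∧
  (∀ j, ∀ t ∈ Set.Ioo (0:ℝ) T,
    Tendsto (fun s => U s j) (nhdsWithin t (Set.Ioi t)) (nhds (U t j))) ∧
  (∀ j, 0 ≤ U 0 j) ∧
  (∀ t ∈ Set.Ico (0:ℝ) T, ∀ k, A.mulVec (U t) k ≤ β k + t * b k) ∧
  (∀ k, A.mulVec (U T) k ≤ β k + T * b k + lam k)

/-- A relaxed feasible solution of M-CLP*: as a feasible solution, but right-continuity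
is only required on `(0,T]`, so possibly `P(0) < P(0+)`. -/
def RelaxedDualFeasible {K J : ℕ} (A : Matrix (Fin K) (Fin J) ℝ) (c γ μ : Fin J → ℝ)
    (T : ℝ) (P : ℝ → Fin K → ℝ) : Prop :=
  (∀ k, MonotoneOn (fun s => P s k) (Set.Icc 0 T)) ∧
  (∀ k, ∀ s ∈ Set.Ioo (0:ℝ) T,
    Tendsto (fun r => P r k) (nhdsWithin s (Set.Ioi s)) (nhds (P s k))) ∧
  (∀ k, 0 ≤ P 0 k) ∧
  (∀ s ∈ Set.Ico (0:ℝ) T, ∀ j, γ j + s * c j ≤ A.transpose.mulVec (P s) j) ∧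
  (∀ j, γ j + T * c j + μ j ≤ A.transpose.mulVec (P T) j)

/-- `ν i` is the Lebesgue–Stieltjes measure on `[0,T]` of the nondecreasing function
`F · i` (right-continuous on `(0,T]`) with the convention `F(0-) = 0`, where
`L i = F(0+) i` is the right limit at `0`: it is carried by `[0,T]`, assigns mass
`F(0+) i` to `{0}`, and satisfies `ν i [0,x] = F x i = F(x+) i` for `0 < x ≤ T`. -/
def RelaxedLSFamily {I : Type*} (T : ℝ) (F : ℝ → I → ℝ) (L : I → ℝ)
    (ν : I → Measure ℝ) : Prop :=
  ∀ i, ν i (Set.Icc 0 T)ᶜ = 0 ∧ ν i {0} = ENNReal.ofReal (L i) ∧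
    ∀ x : ℝ, 0 < x → x ≤ T → ν i (Set.Icc 0 x) = ENNReal.ofReal (F x i)

/-- The M-CLP objective. -/
noncomputable def zPrimal {J : ℕ} (c γ μ : Fin J → ℝ) (T : ℝ) (U : ℝ → Fin J → ℝ)
    (ν : Fin J → Measure ℝ) : ℝ :=
  (∑ j, μ j * U 0 j) + ∑ j, ∫ t in Set.Icc (0:ℝ) T, (γ j + (T - t) * c j) ∂(ν j)

/-- The M-CLP* objective. -/
noncomputable def zDual {K : ℕ} (b β lam : Fin K → ℝ) (T : ℝ) (P : ℝ → Fin K → ℝ)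
    (ν : Fin K → Measure ℝ) : ℝ :=
  (∑ k, lam k * P 0 k) + ∑ k, ∫ s in Set.Icc (0:ℝ) T, (β k + (T - s) * b k) ∂(ν k)

theorem lsFamily_aux {I : Type*} {T : ℝ} (hT : 0 < T) {F G : ℝ → I → ℝ} {L : I → ℝ}
    (hFG : ∀ x, 0 < x → F x = G x) {ν ν' : I → Measure ℝ}
    (h : RelaxedLSFamily T F L ν) (h' : RelaxedLSFamily T G L ν') : ν = ν' := by
  funext i
  obtain ⟨h1, h2, h3⟩ := h i
  obtain ⟨h1', h2', h3'⟩ := h' i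
  have hfin : IsFiniteMeasure (ν i) := by
    refine ⟨?_⟩
    rw [← measure_inter_conull (s := Set.univ) (t := Set.Icc 0 T) (by simpa using h1),
      Set.univ_inter, h3 T hT le_rfl]
    exact ENNReal.ofReal_lt_top
  refine Measure.ext_of_Iic (ν i) (ν' i) (fun a => ?_)
  rw [← measure_inter_conull' (s := Set.Iic a) (t := Set.Icc 0 T)
      (measure_mono_null (fun x hx => hx.2) h1),
    ← measure_inter_conull' (μ := ν' i) (s := Set.Iic a) (t := Set.Icc 0 T)
      (measure_mono_null (fun x hx => hx.2) h1')]
  have e : Set.Iic a ∩ Set.Icc 0 T = Set.Icc 0 (min a T) := by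
    ext x
    simp only [Set.mem_inter_iff, Set.mem_Iic, Set.mem_Icc, le_min_iff]
    tauto
  rw [e]
  rcases lt_trichotomy a 0 with ha | ha | ha
  · rw [Set.Icc_eq_empty (by simp [ha])]
    simp
  · subst ha
    rw [min_eq_left hT.le, Set.Icc_self, h2, h2']
  · have hm : 0 < min a T := lt_min ha hT
    rw [h3 _ hm (min_le_right _ _), h3' _ hm (min_le_right _ _), hFG _ hm]

/-- If `μ ≥ 0` and `U*` is a relaxed feasible solution of M-CLP with right limit
`L = U*(0+)` at `0`, then replacing `U*(0)` by `L` gives a relaxed feasible solution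
`U₀` that is right-continuous at `0` (hence on all of `[0,T]`), and
`z(U₀) − z(U*) = μᵀ(U*(0+) − U*(0)) ≥ 0`. -/
theorem rightContinuous_modification_primal {K J : ℕ}
    (A : Matrix (Fin K) (Fin J) ℝ) (b β lam : Fin K → ℝ) (c γ μ : Fin J → ℝ) (T : ℝ)
    (hT : 0 < T) (hμ : ∀ j, 0 ≤ μ j)
    (U : ℝ → Fin J → ℝ) (hU : RelaxedPrimalFeasible A b β lam T U)
    (L : Fin J → ℝ)
    (hL : ∀ j, Tendsto (fun t => U t j) (nhdsWithin 0 (Set.Ioi 0)) (nhds (L j))) :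
    RelaxedPrimalFeasible A b β lam T (fun t => if t = 0 then L else U t) ∧
    (∀ j, ∀ t ∈ Set.Ico (0:ℝ) T,
      Tendsto (fun s => (if s = 0 then L else U s) j) (nhdsWithin t (Set.Ioi t))
        (nhds ((if t = 0 then L else U t) j))) ∧
    (∀ νStar ν0 : Fin J → Measure ℝ,
      RelaxedLSFamily T U L νStar →
      RelaxedLSFamily T (fun t => if t = 0 then L else U t) L ν0 →
      zPrimal c γ μ T (fun t => if t = 0 then L else U t) ν0 - zPrimal c γ μ T U νStar =
        ∑ j, μ j * (L j - U 0 j)) ∧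
    0 ≤ ∑ j, μ j * (L j - U 0 j) := by
  obtain ⟨hmono, hrc, hpos, hA, hAT⟩ := hU
  have hLle : ∀ j, ∀ t, 0 < t → t ≤ T → L j ≤ U t j := by
    intro j t ht htT
    refine le_of_tendsto (hL j) ?_
    filter_upwards [Ioo_mem_nhdsGT ht] with s hs
    exact hmono j ⟨hs.1.le, hs.2.le.trans htT⟩ ⟨ht.le, htT⟩ hs.2.le
  have hleL : ∀ j, U 0 j ≤ L j := by
    intro j
    refine ge_of_tendsto (hL j) ?_
    filter_upwards [Ioo_mem_nhdsGT hT] with s hs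
    exact hmono j ⟨le_rfl, hT.le⟩ ⟨hs.1.le, hs.2.le⟩ hs.1.le
  have hRC : ∀ j, ∀ t ∈ Set.Ico (0:ℝ) T,
      Tendsto (fun s => (if s = 0 then L else U s) j) (nhdsWithin t (Set.Ioi t))
        (nhds ((if t = 0 then L else U t) j)) := by
    intro j t ht
    have hlim : Tendsto (fun s => U s j) (nhdsWithin t (Set.Ioi t))
        (nhds ((if t = 0 then L else U t) j)) := by
      by_cases h0 : t = 0
      · subst h0
        simpa using hL j
      · rw [if_neg h0]
        exact hrc j t ⟨lt_of_le_of_ne ht.1 (Ne.symm h0), ht.2⟩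
    refine hlim.congr' ?_
    filter_upwards [self_mem_nhdsWithin] with s hs
    have : s ≠ 0 := (lt_of_le_of_lt ht.1 hs).ne'
    rw [if_neg this]
  refine ⟨⟨?_, ?_, ?_, ?_, ?_⟩, hRC, ?_, ?_⟩
  · intro j x hx y hy hxy
    dsimp only
    by_cases hx0 : x = 0
    · by_cases hy0 : y = 0
      · rw [if_pos hx0, if_pos hy0]
      · rw [if_pos hx0, if_neg hy0]
        exact hLle j y (lt_of_le_of_ne hy.1 (Ne.symm hy0)) hy.2
    · have hx1 : 0 < x := lt_of_le_of_ne hx.1 (Ne.symm hx0)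
      rw [if_neg hx0, if_neg (hx1.trans_le hxy).ne']
      exact hmono j hx hy hxy
  · intro j t ht
    exact hRC j t ⟨ht.1.le, ht.2⟩
  · intro j
    simpa using (hpos j).trans (hleL j)
  · intro t ht k
    by_cases h0 : t = 0
    · subst h0
      simp only [if_true]
      have h1 : Tendsto (fun t => A.mulVec (U t) k) (nhdsWithin 0 (Set.Ioi 0))
          (nhds (A.mulVec L k)) := by
        simp only [Matrix.mulVec, dotProduct]
        exact tendsto_finsetSum _ (fun j _ => (hL j).const_mul _)
      have h2 : Tendsto (fun t : ℝ => β k + t * b k) (nhdsWithin 0 (Set.Ioi 0))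
          (nhds (β k + 0 * b k)) :=
        ((by fun_prop : Continuous (fun t : ℝ => β k + t * b k)).tendsto 0).mono_left
          nhdsWithin_le_nhds
      refine le_of_tendsto_of_tendsto h1 h2 ?_
      filter_upwards [Ioo_mem_nhdsGT hT] with s hs
      exact hA s ⟨hs.1.le, hs.2⟩ k
    · simpa only [if_neg h0] using hA t ht k
  · intro k
    simpa only [if_neg hT.ne'] using hAT k
  · intro νStar ν0 hS h0
    have : ν0 = νStar := lsFamily_aux hT (fun x hx => if_neg hx.ne') h0 hS
    subst this
    simp only [zPrimal, if_true, mul_sub, Finset.sum_sub_distrib]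
    ring
  · exact Finset.sum_nonneg (fun j _ => mul_nonneg (hμ j) (sub_nonneg.2 (hleL j)))
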